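/- There exist absolute constants c, C > 0 such that the following holds for all sufficiently large n. Let G be a finite connected graph with n vertices and m edges, consider the lazy simple random walk on G, and let S ⊆ V with |S| = s and total degree d(S) ≤ m/(C·log n). Then for every start vertex u ∉ S and every integer t ≥ C·m/(s·(1−λmax)), the probability that the walk started at u visits no vertex of S during steps 0,1,…,t is at most c·exp(−t·d(S)·(1−λmax)/(14m)). -/

import Mathlib

open scoped ENNReal Classical

-- `lambdaMax P` : the largest absolute value of an eigenvalue of `P` other than the
-- eigenvalue `1` (for an ergodic chain on a connected graph, `max(|λ₂|,…,|λₙ|)`).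
noncomputable def lambdaMax {V : Type*} [Fintype V] [DecidableEq V] (P : Matrix V V ℝ) : ℝ :=
  sSup {x : ℝ | ∃ μ ∈ spectrum ℝ P, μ ≠ 1 ∧ x = |μ|}

-- Transition matrix of the lazy simple random walk on `G`.
noncomputable def lazyMatrix {V : Type*} [Fintype V] [DecidableEq V] (G : SimpleGraph V) :
    Matrix V V ℝ :=
  Matrix.of fun u v =>
    (if u = v then (1 : ℝ) / 2 else 0) +
      (if G.Adj u v then 1 / (2 * ((G.neighborSet u).ncard : ℝ)) else 0)

-- `avoidProb P S u t` : the probability that the chain with transition matrix `P`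
-- started at `u` avoids the set `S` at each of the times `0, 1, …, t`.
noncomputable def avoidProb {V : Type*} [Fintype V] [DecidableEq V] (P : Matrix V V ℝ)
    (S : Finset V) (u : V) (t : ℕ) : ℝ :=
  if u ∈ S then 0
  else ∑ y, ((Matrix.of fun x y => if y ∈ S then 0 else P x y) ^ t) u y

-- `aa P S k x` : probability of avoiding `S` at times `0..k` from `x`.
noncomputable def aa {V : Type*} [Fintype V] [DecidableEq V] (P : Matrix V V ℝ)
    (S : Finset V) : ℕ → V → ℝ
  | 0 => fun x => if x ∈ S then 0 else 1
  | k + 1 => fun x => if x ∈ S then 0 else (P.mulVec (aa P S k)) x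

section abs
set_option linter.unusedSectionVars false
variable {V : Type*} [Fintype V] [DecidableEq V]

theorem avoid_eq_aa (P : Matrix V V ℝ) (S : Finset V) (t : ℕ) (u : V) :
    avoidProb P S u t = aa P S t u := by
  unfold avoidProb
  induction t generalizing u with
  | zero => simp [aa, Matrix.one_apply]
  | succ k ih =>
    simp only [aa]
    by_cases hu : u ∈ S
    · simp [hu]
    · simp only [hu, if_false]
      simp only [pow_succ', Matrix.mul_apply, Matrix.mulVec, dotProduct]
      rw [Finset.sum_comm]
      refine Finset.sum_congr rfl fun z _ => ?_
      rw [← Finset.mul_sum, ← ih z]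
      by_cases hz : z ∈ S <;> simp [hz]

theorem aa_mem (P : Matrix V V ℝ) (S : Finset V) (hP : ∀ x y, 0 ≤ P x y)
    (h1 : ∀ x, ∑ y, P x y = 1) (k : ℕ) (x : V) : 0 ≤ aa P S k x ∧ aa P S k x ≤ 1 := by
  induction k generalizing x with
  | zero => simp only [aa]; split_ifs <;> norm_num
  | succ k ih =>
    simp only [aa]
    split_ifs
    · norm_num
    · simp only [Matrix.mulVec, dotProduct]
      constructor
      · exact Finset.sum_nonneg fun y _ => mul_nonneg (hP _ _) (ih y).1
      · rw [← h1 x]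
        exact Finset.sum_le_sum fun y _ => mul_le_of_le_one_right (hP _ _) (ih y).2

theorem aa_le_pow (P : Matrix V V ℝ) (S : Finset V) (hP : ∀ x y, 0 ≤ P x y)
    (h1 : ∀ x, ∑ y, P x y = 1) (k T : ℕ) (x : V) :
    aa P S (k + T) x ≤ ((P ^ T).mulVec (aa P S k)) x := by
  induction T generalizing x with
  | zero => simp
  | succ T ih =>
    have h0 : 0 ≤ (P.mulVec (aa P S (k + T))) x := by
      simp only [Matrix.mulVec, dotProduct]
      exact Finset.sum_nonneg fun y _ => mul_nonneg (hP _ _) (aa_mem P S hP h1 _ y).1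
    have : aa P S (k + (T + 1)) x ≤ (P.mulVec (aa P S (k + T))) x := by
      rw [← add_assoc]; simp only [aa]
      split_ifs
      · exact h0
      · exact le_rfl
    refine this.trans ?_
    rw [pow_succ', ← Matrix.mulVec_mulVec]
    simp only [Matrix.mulVec, dotProduct]
    refine Finset.sum_le_sum fun y _ => mul_le_mul_of_nonneg_left ?_ (hP _ _)
    simpa [Matrix.mulVec, dotProduct] using ih y

theorem wsum_mulVec (P : Matrix V V ℝ) (d : V → ℝ) (hst : ∀ y, ∑ x, d x * P x y = d y)
    (f : V → ℝ) : ∑ x, d x * (P.mulVec f) x = ∑ x, d x * f x := by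
  simp only [Matrix.mulVec, dotProduct, Finset.mul_sum]
  rw [Finset.sum_comm]
  refine Finset.sum_congr rfl fun y _ => ?_
  rw [← hst y, Finset.sum_mul]
  exact Finset.sum_congr rfl fun x _ => by ring

theorem mulVec_sub_const (P : Matrix V V ℝ) (h1 : ∀ x, ∑ y, P x y = 1) (f : V → ℝ) (a : ℝ)
    (x : V) : (P.mulVec (fun y => f y - a)) x = (P.mulVec f) x - a := by
  simp only [Matrix.mulVec, dotProduct, mul_sub, Finset.sum_sub_distrib, ← Finset.sum_mul, h1,
    one_mul]

theorem var_eq (d : V → ℝ) (f : V → ℝ) (a : ℝ) (ha : ∑ x, d x * f x = (∑ x, d x) * a) :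
    ∑ x, d x * (f x - a) ^ 2 = ∑ x, d x * f x ^ 2 - (∑ x, d x) * a ^ 2 := by
  have : ∑ x, d x * (f x - a) ^ 2 =
      ∑ x, d x * f x ^ 2 - 2 * a * ∑ x, d x * f x + (∑ x, d x) * a ^ 2 := by
    rw [Finset.mul_sum, Finset.sum_mul, ← Finset.sum_sub_distrib, ← Finset.sum_add_distrib]
    exact Finset.sum_congr rfl fun x _ => by ring
  rw [this, ha]; ring

theorem wCS (d : V → ℝ) (hd : ∀ x, 0 ≤ d x) (f g : V → ℝ) :
    (∑ x, d x * (f x * g x)) ^ 2 ≤ (∑ x, d x * f x ^ 2) * ∑ x, d x * g x ^ 2 := by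
  have := Finset.sum_mul_sq_le_sq_mul_sq Finset.univ
    (fun x => √(d x) * f x) (fun x => √(d x) * g x)
  have e : ∀ x, √(d x) * √(d x) = d x := fun x => Real.mul_self_sqrt (hd x)
  have e1 : ∑ x, d x * (f x * g x) = ∑ x, √(d x) * f x * (√(d x) * g x) :=
    Finset.sum_congr rfl fun x _ => by linear_combination (-(f x * g x)) * e x
  have e2 : ∀ h : V → ℝ, ∑ x, d x * h x ^ 2 = ∑ x, (√(d x) * h x) ^ 2 := fun h =>
    Finset.sum_congr rfl fun x _ => by linear_combination (-(h x ^ 2)) * e x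
  rw [e1, e2, e2]
  exact this

theorem alg_core (W α β p q l Y δ : ℝ) (hW : 0 < W) (hp : 0 ≤ p) (hq : 0 ≤ q) (hl : 0 ≤ l)
    (hl1 : l ≤ 1) (hY : Y ^ 2 ≤ l ^ 2 * p ^ 2 * q ^ 2)
    (hα : W * α ^ 2 ≤ (1 - δ) * (W * α ^ 2 + p ^ 2))
    (hβ : W * β ^ 2 ≤ (1 - δ) * (W * β ^ 2 + q ^ 2))
    (hX : W * α * β + Y = W * β ^ 2 + q ^ 2) :
    W * β ^ 2 + q ^ 2 ≤ (1 - (1 - l) * δ) ^ 2 * (W * α ^ 2 + p ^ 2) := by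
  have hY' : |Y| ≤ l * p * q := by
    apply abs_le_of_sq_le_sq _ (by positivity)
    nlinarith
  have h2 : 2 * (α * β * Y) ≤ l * (α ^ 2 * q ^ 2 + β ^ 2 * p ^ 2) := by
    have a1 : α * β * Y ≤ |α| * |β| * (l * p * q) := by
      calc α * β * Y ≤ |α * β * Y| := le_abs_self _
        _ = |α| * |β| * |Y| := by rw [abs_mul, abs_mul]
        _ ≤ _ := by gcongr
    have a2 : 0 ≤ l * (|α| * q - |β| * p) ^ 2 := by positivity
    have e1 := sq_abs α
    have e2 := sq_abs β
    have a3 : l * (|α| * q - |β| * p) ^ 2 =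
        l * (α ^ 2 * q ^ 2 + β ^ 2 * p ^ 2) - 2 * (|α| * |β| * (l * p * q)) := by
      rw [← e1, ← e2]; ring
    linarith
  have h3 : (W * α * β + Y) ^ 2 ≤ (W * α ^ 2 + l * p ^ 2) * (W * β ^ 2 + l * q ^ 2) := by
    nlinarith [mul_le_mul_of_nonneg_left h2 hW.le]
  have b1 : W * α ^ 2 + l * p ^ 2 ≤ (1 - (1 - l) * δ) * (W * α ^ 2 + p ^ 2) := by
    nlinarith
  have b2 : W * β ^ 2 + l * q ^ 2 ≤ (1 - (1 - l) * δ) * (W * β ^ 2 + q ^ 2) := by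
    nlinarith
  have h4 : (W * β ^ 2 + q ^ 2) ^ 2 ≤
      ((1 - (1 - l) * δ) * (W * α ^ 2 + p ^ 2)) * ((1 - (1 - l) * δ) * (W * β ^ 2 + q ^ 2)) := by
    rw [hX] at h3
    refine h3.trans ?_
    exact mul_le_mul b1 b2 (by positivity) (le_trans (by positivity) b1)
  rcases (show 0 ≤ W * β ^ 2 + q ^ 2 by positivity).eq_or_lt with h | h
  · rw [← h]; positivity
  · refine le_of_mul_le_mul_right ?_ h
    nlinarith

theorem mean_sq_le (d : V → ℝ) (hd : ∀ x, 0 ≤ d x) (S : Finset V) (f : V → ℝ)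
    (hf : ∀ x ∈ S, f x = 0) :
    (∑ x, d x * f x) ^ 2 ≤ (∑ x, d x - ∑ x ∈ S, d x) * ∑ x, d x * f x ^ 2 := by
  have := wCS d hd (fun x => if x ∈ S then 0 else 1) f
  convert this using 2
  · refine Finset.sum_congr rfl fun x _ => ?_
    by_cases h : x ∈ S <;> simp [h, hf]
  · rw [sub_eq_iff_eq_add, ← Finset.sum_filter_add_sum_filter_not Finset.univ (· ∈ S)]
    rw [add_comm]
    congr 1
    · rw [Finset.sum_filter]
      refine Finset.sum_congr rfl fun x _ => ?_
      by_cases h : x ∈ S <;> simp [h]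
    · exact Finset.sum_congr (by ext; simp) fun _ _ => rfl

theorem contr (P : Matrix V V ℝ) (d : V → ℝ) (hd : ∀ x, 0 ≤ d x) (hW : 0 < ∑ x, d x)
    (h1 : ∀ x, ∑ y, P x y = 1) (hst : ∀ y, ∑ x, d x * P x y = d y) (l : ℝ) (hl : 0 ≤ l)
    (hl1 : l ≤ 1)
    (hgap : ∀ f : V → ℝ, ∑ x, d x * f x = 0 →
      ∑ x, d x * (P.mulVec f) x ^ 2 ≤ l ^ 2 * ∑ x, d x * f x ^ 2)
    (S : Finset V) (f g : V → ℝ) (hf : ∀ x ∈ S, f x = 0)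
    (hg : ∀ x, g x = if x ∈ S then 0 else (P.mulVec f) x) :
    ∑ x, d x * g x ^ 2 ≤
      (1 - (1 - l) * ((∑ x ∈ S, d x) / ∑ x, d x)) ^ 2 * ∑ x, d x * f x ^ 2 := by
  set W := ∑ x, d x with hWd
  set α := (∑ x, d x * f x) / W with hα
  set β := (∑ x, d x * g x) / W with hβ
  have eα : ∑ x, d x * f x = W * α := by rw [hα]; field_simp
  have eβ : ∑ x, d x * g x = W * β := by rw [hβ]; field_simp
  have vf := var_eq d f α eα
  have vg := var_eq d g β eβ
  rw [← hWd] at vf vg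
  have hf0 : ∑ x, d x * (f x - α) = 0 := by
    simp only [mul_sub, Finset.sum_sub_distrib, ← Finset.sum_mul, eα]; ring
  have hgf := hgap _ hf0
  have hPf0 := wsum_mulVec P d hst (fun x => f x - α)
  rw [hf0] at hPf0
  set F := P.mulVec (fun x => f x - α) with hF
  have hFx : ∀ x, F x = (P.mulVec f) x - α := mulVec_sub_const P h1 f α
  have hcs := wCS d hd (fun x => g x - β) F
  have n1 : 0 ≤ ∑ x, d x * (f x - α) ^ 2 :=
    Finset.sum_nonneg fun x _ => mul_nonneg (hd x) (sq_nonneg _)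
  have n2 : 0 ≤ ∑ x, d x * (g x - β) ^ 2 :=
    Finset.sum_nonneg fun x _ => mul_nonneg (hd x) (sq_nonneg _)
  have hX : W * α * β + ∑ x, d x * ((g x - β) * F x) = ∑ x, d x * g x ^ 2 := by
    have e1 : ∑ x, d x * g x ^ 2 = ∑ x, d x * g x * α + ∑ x, d x * (g x * F x) := by
      rw [← Finset.sum_add_distrib]
      refine Finset.sum_congr rfl fun x _ => ?_
      rw [hFx, hg x]
      split_ifs <;> ring
    have e2 : ∑ x, d x * ((g x - β) * F x) =
        ∑ x, d x * (g x * F x) - β * ∑ x, d x * F x := by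
      rw [Finset.mul_sum, ← Finset.sum_sub_distrib]
      exact Finset.sum_congr rfl fun x _ => by ring
    rw [e1, e2, hPf0, ← Finset.sum_mul, eβ]; ring
  have mf := mean_sq_le d hd S f hf
  have mg := mean_sq_le d hd S g (fun x hx => by rw [hg]; simp [hx])
  rw [eα, ← hWd] at mf
  rw [eβ, ← hWd] at mg
  have key : ∀ a N : ℝ, (W * a) ^ 2 ≤ (W - ∑ x ∈ S, d x) * N →
      W * a ^ 2 ≤ (1 - (∑ x ∈ S, d x) / W) * N := by
    intro a N h
    refine le_of_mul_le_mul_left ?_ hW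
    have : W * ((1 - (∑ x ∈ S, d x) / W) * N) = (W - ∑ x ∈ S, d x) * N := by field_simp
    rw [this]; linarith
  have sf := Real.sq_sqrt n1
  have sg := Real.sq_sqrt n2
  have := alg_core W α β √(∑ x, d x * (f x - α) ^ 2) √(∑ x, d x * (g x - β) ^ 2) l
    (∑ x, d x * ((g x - β) * F x)) ((∑ x ∈ S, d x) / W) hW (by positivity) (by positivity) hl hl1
    (by
      rw [sf, sg]
      refine hcs.trans ?_
      nlinarith [mul_le_mul_of_nonneg_left hgf n2])
    (by rw [sf, vf]; convert key _ _ mf using 2; ring)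
    (by rw [sg, vg]; convert key _ _ mg using 2; ring)
    (by rw [sg, vg, hX]; ring)
  rw [sf, sg, vf, vg] at this
  simpa using this

theorem pow_gap (P : Matrix V V ℝ) (d : V → ℝ) (hst : ∀ y, ∑ x, d x * P x y = d y) (l : ℝ)
    (hgap : ∀ f : V → ℝ, ∑ x, d x * f x = 0 →
      ∑ x, d x * (P.mulVec f) x ^ 2 ≤ l ^ 2 * ∑ x, d x * f x ^ 2) (T : ℕ)
    (f : V → ℝ) (hf : ∑ x, d x * f x = 0) :
    ∑ x, d x * ((P ^ T).mulVec f) x = 0 ∧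
    ∑ x, d x * ((P ^ T).mulVec f) x ^ 2 ≤ (l ^ T) ^ 2 * ∑ x, d x * f x ^ 2 := by
  induction T with
  | zero => simp [hf]
  | succ T ih =>
    rw [pow_succ', ← Matrix.mulVec_mulVec]
    refine ⟨by rw [wsum_mulVec P d hst, ih.1], (hgap _ ih.1).trans ?_⟩
    calc _ ≤ l ^ 2 * ((l ^ T) ^ 2 * ∑ x, d x * f x ^ 2) :=
          mul_le_mul_of_nonneg_left ih.2 (sq_nonneg _)
      _ = _ := by ring

theorem aa_norm (P : Matrix V V ℝ) (d : V → ℝ) (hd : ∀ x, 0 ≤ d x) (hW : 0 < ∑ x, d x)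
    (h1 : ∀ x, ∑ y, P x y = 1) (hst : ∀ y, ∑ x, d x * P x y = d y) (l : ℝ) (hl : 0 ≤ l)
    (hl1 : l ≤ 1)
    (hgap : ∀ f : V → ℝ, ∑ x, d x * f x = 0 →
      ∑ x, d x * (P.mulVec f) x ^ 2 ≤ l ^ 2 * ∑ x, d x * f x ^ 2)
    (S : Finset V) (k : ℕ) :
    ∑ x, d x * aa P S k x ^ 2 ≤
      ((1 - (1 - l) * ((∑ x ∈ S, d x) / ∑ x, d x)) ^ k) ^ 2 * ∑ x, d x := by
  induction k with
  | zero =>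
    simp only [pow_zero, one_pow, one_mul]
    refine Finset.sum_le_sum fun x _ => mul_le_of_le_one_right (hd x) ?_
    simp only [aa]; split_ifs <;> norm_num
  | succ k ih =>
    refine (contr P d hd hW h1 hst l hl hl1 hgap S (aa P S k) (aa P S (k + 1)) ?_ ?_).trans ?_
    · intro x hx
      cases k <;> simp [aa, hx]
    · intro x; rfl
    · refine (mul_le_mul_of_nonneg_left ih (sq_nonneg _)).trans (le_of_eq ?_)
      ring

theorem aa_bound (P : Matrix V V ℝ) (d : V → ℝ) (hd : ∀ x, 0 ≤ d x) (hW : 0 < ∑ x, d x)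
    (hP : ∀ x y, 0 ≤ P x y)
    (h1 : ∀ x, ∑ y, P x y = 1) (hst : ∀ y, ∑ x, d x * P x y = d y) (l : ℝ) (hl : 0 ≤ l)
    (hl1 : l ≤ 1)
    (hgap : ∀ f : V → ℝ, ∑ x, d x * f x = 0 →
      ∑ x, d x * (P.mulVec f) x ^ 2 ≤ l ^ 2 * ∑ x, d x * f x ^ 2)
    (S : Finset V) (k T : ℕ) (u : V) (hu : 1 ≤ d u) (B : ℝ) (hB : 0 ≤ B)
    (hB2 : ∑ x, d x ≤ B ^ 2) :
    aa P S (k + T) u ≤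
      (1 - (1 - l) * ((∑ x ∈ S, d x) / ∑ x, d x)) ^ k * (1 + l ^ T * B) := by
  have hN := aa_norm P d hd hW h1 hst l hl hl1 hgap S k
  refine (aa_le_pow P S hP h1 k T u).trans ?_
  set W := ∑ x, d x with hWd
  have hSW : (∑ x ∈ S, d x) / W ≤ 1 := by
    rw [div_le_one hW]
    exact Finset.sum_le_sum_of_subset_of_nonneg (Finset.subset_univ _) fun x _ _ => hd x
  have hSW0 : 0 ≤ (∑ x ∈ S, d x) / W := div_nonneg (Finset.sum_nonneg fun x _ => hd x) hW.le
  have hr0 : 0 ≤ 1 - (1 - l) * ((∑ x ∈ S, d x) / W) := by nlinarith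
  set r := (1 - (1 - l) * ((∑ x ∈ S, d x) / W)) ^ k with hr
  have hrk : 0 ≤ r := pow_nonneg hr0 k
  set f := aa P S k with hf
  set α := (∑ x, d x * f x) / W with hα
  have eα : ∑ x, d x * f x = W * α := by rw [hα]; field_simp
  have vf := var_eq d f α eα
  rw [← hWd] at vf
  have hf0 : ∑ x, d x * (f x - α) = 0 := by
    simp only [mul_sub, Finset.sum_sub_distrib, ← Finset.sum_mul, eα]; ring
  have n1 : 0 ≤ ∑ x, d x * (f x - α) ^ 2 :=
    Finset.sum_nonneg fun x _ => mul_nonneg (hd x) (sq_nonneg _)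
  have hα1 : α ≤ r := by
    refine le_of_sq_le_sq ?_ hrk |> id
    refine le_of_mul_le_mul_left ?_ hW
    nlinarith
  have hp := (pow_gap P d hst l hgap T _ hf0).2
  have hpt : ∀ (T : ℕ) x, ((P ^ T).mulVec (fun y => f y - α)) x = ((P ^ T).mulVec f) x - α := by
    intro T
    induction T with
    | zero => simp
    | succ T ih =>
      intro x
      rw [pow_succ', ← Matrix.mulVec_mulVec, ← Matrix.mulVec_mulVec,
        ← mulVec_sub_const P h1]
      congr 1
      funext y
      exact ih y
  have hone : d u * ((P ^ T).mulVec (fun y => f y - α)) u ^ 2 ≤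
      ∑ x, d x * ((P ^ T).mulVec (fun y => f y - α)) x ^ 2 :=
    Finset.single_le_sum (f := fun x => d x * ((P ^ T).mulVec (fun y => f y - α)) x ^ 2)
      (fun x _ => mul_nonneg (hd x) (sq_nonneg _)) (Finset.mem_univ u)
  set z := ((P ^ T).mulVec (fun y => f y - α)) u with hz
  have hzz : z ≤ l ^ T * B * r := by
    apply le_of_sq_le_sq _ (by positivity)
    have c1 : z ^ 2 ≤ d u * z ^ 2 := by nlinarith [sq_nonneg z]
    have c2 : ∑ x, d x * (f x - α) ^ 2 ≤ r ^ 2 * B ^ 2 := by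
      have : 0 ≤ W * α ^ 2 := by positivity
      nlinarith [mul_le_mul_of_nonneg_left hB2 (sq_nonneg r)]
    calc z ^ 2 ≤ (l ^ T) ^ 2 * (r ^ 2 * B ^ 2) :=
          c1.trans (hone.trans (hp.trans (mul_le_mul_of_nonneg_left c2 (sq_nonneg _))))
      _ = _ := by ring
  have := hpt T u
  rw [← hz] at this
  linarith

end abs

section graph
set_option linter.unusedSectionVars false
variable {V : Type} [Fintype V] [DecidableEq V]

theorem abs_le_lambdaMax (P : Matrix V V ℝ) (μ : ℝ) (hμ : μ ∈ spectrum ℝ P) (h1 : μ ≠ 1) :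
    |μ| ≤ lambdaMax P := by
  unfold lambdaMax
  apply le_csSup
  · have hfin : (spectrum ℝ P).Finite := Matrix.finite_real_spectrum
    refine (Set.Finite.subset (hfin.image fun x => |x|) ?_).bddAbove
    rintro x ⟨ν, hν, -, rfl⟩
    exact ⟨ν, hν, rfl⟩
  · exact ⟨μ, hμ, h1, rfl⟩

theorem lambdaMax_nonneg (P : Matrix V V ℝ) : 0 ≤ lambdaMax P := by
  unfold lambdaMax
  apply Real.sSup_nonneg
  rintro x ⟨ν, -, -, rfl⟩
  exact abs_nonneg _

theorem gap_abs (P : Matrix V V ℝ) (d : V → ℝ) (hd : ∀ x, 0 < d x)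
    (hrev : ∀ x y, d x * P x y = d y * P y x)
    (hharm : ∀ f : V → ℝ, P.mulVec f = f → ∀ x y, f x = f y)
    (f : V → ℝ) (hf : ∑ x, d x * f x = 0) :
    ∑ x, d x * (P.mulVec f) x ^ 2 ≤ (lambdaMax P) ^ 2 * ∑ x, d x * f x ^ 2 := by
  have hr : ∀ x, 0 < √(d x) := fun x => Real.sqrt_pos.2 (hd x)
  have hs : ∀ x, √(d x) ^ 2 = d x := fun x => Real.sq_sqrt (hd x).le
  set A : Matrix V V ℝ := Matrix.of fun x y => √(d x) * P x y / √(d y) with hAdef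
  have hA : A.IsHermitian := by
    ext x y
    simp only [hAdef, Matrix.conjTranspose_apply, Matrix.of_apply, star_trivial]
    have := hrev x y
    rw [← hs x, ← hs y] at this
    rw [div_eq_div_iff (hr x).ne' (hr y).ne']
    linarith
  have hAv : ∀ (g : V → ℝ) x, (A.mulVec g) x = √(d x) * (P.mulVec (fun y => g y / √(d y))) x := by
    intro g x
    simp only [hAdef, Matrix.mulVec, dotProduct, Matrix.of_apply, Finset.mul_sum]
    exact Finset.sum_congr rfl fun y _ => by ring
  set e := hA.eigenvectorBasis with he
  have hev : ∀ i, A.mulVec (e i) = hA.eigenvalues i • (e i : V → ℝ) :=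
    fun i => hA.mulVec_eigenvectorBasis i
  have hevP : ∀ i, P.mulVec (fun y => e i y / √(d y)) =
      hA.eigenvalues i • (fun y => e i y / √(d y)) := by
    intro i
    funext x
    have h := congrFun (hev i) x
    rw [hAv] at h
    simp only [Pi.smul_apply, smul_eq_mul] at h ⊢
    have := (hr x).ne'
    field_simp
    linarith
  set h : EuclideanSpace ℝ V := WithLp.toLp 2 (fun x => √(d x) * f x) with hh
  set Ah : EuclideanSpace ℝ V := WithLp.toLp 2 (A.mulVec h) with hAh
  have inner_eq : ∀ a b : EuclideanSpace ℝ V, inner ℝ a b = ∑ x, a x * b x := by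
    intro a b
    rw [PiLp.inner_apply]
    exact Finset.sum_congr rfl fun x _ => by simp [mul_comm]
  have hsymm : ∀ i, inner ℝ (e i) Ah = hA.eigenvalues i * inner ℝ (e i) h := by
    intro i
    have e1 : inner ℝ (e i) Ah = (e i : V → ℝ) ⬝ᵥ A.mulVec h := by
      rw [inner_eq]; rfl
    have e2 : inner ℝ (e i) h = (e i : V → ℝ) ⬝ᵥ (h : V → ℝ) := by
      rw [inner_eq]; rfl
    have hT : A.transpose = A := by
      have := hA; unfold Matrix.IsHermitian at this
      rwa [Matrix.conjTranspose_eq_transpose_of_trivial] at this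
    rw [e1, e2, Matrix.dotProduct_mulVec, ← Matrix.mulVec_transpose, hT, hev, smul_dotProduct,
      smul_eq_mul]
  have hle : ∀ i, (inner ℝ (e i) Ah) ^ 2 ≤ (lambdaMax P) ^ 2 * (inner ℝ (e i) h) ^ 2 := by
    intro i
    rw [hsymm, mul_pow]
    by_cases h1 : hA.eigenvalues i = 1
    · have hc := hevP i
      rw [h1, one_smul] at hc
      have hc := hharm _ hc
      have : inner ℝ (e i) h = 0 := by
        rw [inner_eq]
        rcases isEmpty_or_nonempty V with hV | ⟨⟨v⟩⟩
        · simp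
        · have hx : ∀ x, e i x * h x = (e i v / √(d v)) * (d x * f x) := by
            intro x
            have := hc v x
            simp only at this
            rw [this]
            simp only [hh]
            have h5 := (hr x).ne'
            have h6 := hs x
            field_simp
            linear_combination (e i x * f x) * h6
          simp only [hx, ← Finset.mul_sum, hf, mul_zero]
      rw [this]; simp
    · refine mul_le_mul_of_nonneg_right ?_ (sq_nonneg _)
      have hsp : hA.eigenvalues i ∈ spectrum ℝ P := by
        rw [← Matrix.spectrum_toLin']
        apply Module.End.HasEigenvalue.mem_spectrum
        refine Module.End.hasEigenvalue_of_hasEigenvector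
          (x := fun y => e i y / √(d y)) ⟨?_, ?_⟩
        · rw [Module.End.mem_eigenspace_iff, Matrix.toLin'_apply]
          exact hevP i
        · intro h0
          have : e i = 0 := by
            ext x
            have h2 := congrFun h0 x
            simp only [Pi.zero_apply, div_eq_zero_iff] at h2
            rcases h2 with h2 | h2
            · simpa using h2
            · exact absurd h2 (hr x).ne'
          exact e.orthonormal.ne_zero i this
      have := abs_le_lambdaMax P _ hsp h1
      rw [← sq_abs]
      exact pow_le_pow_left₀ (abs_nonneg _) this 2
  have hpar : ∀ a : EuclideanSpace ℝ V, ∑ i, (inner ℝ (e i) a) ^ 2 = ∑ x, a x ^ 2 := by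
    intro a
    have := e.sum_sq_norm_inner_right a
    simp only [Real.norm_eq_abs, sq_abs] at this
    rw [this, EuclideanSpace.norm_sq_eq]
    simp
  have := Finset.sum_le_sum fun i (_ : i ∈ Finset.univ) => hle i
  rw [← Finset.mul_sum, hpar, hpar] at this
  have k1 : ∀ x, Ah x ^ 2 = d x * (P.mulVec f) x ^ 2 := by
    intro x
    have : Ah x = (A.mulVec h) x := rfl
    rw [this, hAv, mul_pow, hs]
    congr 4
    funext y
    simp only [hh]
    have := (hr y).ne'
    field_simp
  have k2 : ∀ x, h x ^ 2 = d x * f x ^ 2 := by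
    intro x
    simp only [hh]
    rw [mul_pow, hs]
  simpa only [k1, k2] using this

theorem deg_eq (G : SimpleGraph V) (x : V) :
    ((G.neighborSet x).ncard : ℝ) = ∑ y, if G.Adj x y then (1 : ℝ) else 0 := by
  rw [Set.ncard_eq_toFinset_card', Finset.sum_boole]
  congr 2
  ext y; simp

theorem deg_pos (G : SimpleGraph V) (hG : G.Connected) (hn : 2 ≤ Fintype.card V) (x : V) :
    (1 : ℝ) ≤ ((G.neighborSet x).ncard : ℝ) := by
  have : Nontrivial V := Fintype.one_lt_card_iff_nontrivial.1 hn
  obtain ⟨y, hy⟩ := hG.preconnected.exists_adj_of_nontrivial x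
  have : 0 < (G.neighborSet x).ncard := (Set.ncard_pos).2 ⟨y, hy⟩
  exact_mod_cast this

theorem deg_sum (G : SimpleGraph V) :
    ∑ x, ((G.neighborSet x).ncard : ℝ) = 2 * (G.edgeSet.ncard : ℝ) := by
  have := G.sum_degrees_eq_twice_card_edges
  have h2 : G.edgeSet.ncard = G.edgeFinset.card := by
    rw [Set.ncard_eq_toFinset_card']; rfl
  rw [h2]
  have h3 : ∀ x, (G.neighborSet x).ncard = G.degree x := by
    intro x
    rw [Set.ncard_eq_toFinset_card']; rfl
  simp only [h3]
  exact_mod_cast this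

theorem deg_sum_le (G : SimpleGraph V) :
    ∑ x, ((G.neighborSet x).ncard : ℝ) ≤ (Fintype.card V : ℝ) ^ 2 := by
  have : ∀ x, ((G.neighborSet x).ncard : ℝ) ≤ Fintype.card V := by
    intro x
    rw [← Nat.card_eq_fintype_card]
    exact_mod_cast Set.ncard_le_card _
  calc _ ≤ ∑ x : V, (Fintype.card V : ℝ) := Finset.sum_le_sum fun x _ => this x
    _ = _ := by simp [sq]

theorem lazy_nonneg (G : SimpleGraph V) (x y : V) : 0 ≤ lazyMatrix G x y := by
  simp only [lazyMatrix, Matrix.of_apply]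
  positivity

theorem lazy_rev (G : SimpleGraph V) (hd : ∀ x, (1 : ℝ) ≤ ((G.neighborSet x).ncard : ℝ)) (x y : V) :
    ((G.neighborSet x).ncard : ℝ) * lazyMatrix G x y =
      ((G.neighborSet y).ncard : ℝ) * lazyMatrix G y x := by
  have hx : ((G.neighborSet x).ncard : ℝ) ≠ 0 := by linarith [hd x]
  have hy : ((G.neighborSet y).ncard : ℝ) ≠ 0 := by linarith [hd y]
  by_cases h : x = y
  · subst h; rfl
  · simp only [lazyMatrix, Matrix.of_apply, h, Ne.symm h, if_false, G.adj_comm y x]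
    split_ifs
    · field_simp; ring
    · simp

theorem lazy_mulVec (G : SimpleGraph V) (hd : ∀ x, (1 : ℝ) ≤ ((G.neighborSet x).ncard : ℝ))
    (f : V → ℝ) (x : V) :
    2 * ((G.neighborSet x).ncard : ℝ) * ((lazyMatrix G).mulVec f) x =
      ((G.neighborSet x).ncard : ℝ) * f x + ∑ y, if G.Adj x y then f y else 0 := by
  have hx : ((G.neighborSet x).ncard : ℝ) ≠ 0 := by linarith [hd x]
  simp only [Matrix.mulVec, dotProduct, lazyMatrix, Matrix.of_apply, add_mul,
    Finset.sum_add_distrib, mul_add, ite_mul, zero_mul]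
  congr 1
  · simp; field_simp
  · rw [Finset.mul_sum]
    refine Finset.sum_congr rfl fun y _ => ?_
    split_ifs
    · field_simp
    · simp

theorem lazy_row (G : SimpleGraph V) (hd : ∀ x, (1 : ℝ) ≤ ((G.neighborSet x).ncard : ℝ))
    (x : V) : ∑ y, lazyMatrix G x y = 1 := by
  have := lazy_mulVec G hd (fun _ => 1) x
  rw [← deg_eq] at this
  simp only [Matrix.mulVec, dotProduct, mul_one] at this
  have hx : 0 < ((G.neighborSet x).ncard : ℝ) := by linarith [hd x]
  refine mul_left_cancel₀ (by positivity : 2 * ((G.neighborSet x).ncard : ℝ) ≠ 0) ?_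
  linarith

theorem lazy_harm (G : SimpleGraph V) (hG : G.Connected)
    (hd : ∀ x, (1 : ℝ) ≤ ((G.neighborSet x).ncard : ℝ)) (f : V → ℝ)
    (hf : (lazyMatrix G).mulVec f = f) (x y : V) : f x = f y := by
  have hL : (G.lapMatrix ℝ).mulVec f = 0 := by
    funext v
    rw [SimpleGraph.lapMatrix_mulVec_apply]
    have := lazy_mulVec G hd f v
    rw [hf] at this
    have h3 : (G.neighborSet v).ncard = G.degree v := by
      rw [Set.ncard_eq_toFinset_card']; rfl
    rw [h3] at this
    have h4 : ∑ u ∈ G.neighborFinset v, f u = ∑ y, if G.Adj v y then f y else 0 := by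
      rw [← Finset.sum_filter]
      exact Finset.sum_congr (by ext; simp) fun _ _ => rfl
    rw [h4]
    simp only [Pi.zero_apply]
    linarith
  exact (SimpleGraph.lapMatrix_mulVec_eq_zero_iff_forall_reachable G).1 hL x y (hG.preconnected x y)

end graph

set_option maxHeartbeats 1000000

/-- There are absolute constants `c, C > 0` such that, for all sufficiently
large `n`: for every connected graph `G` on `n` vertices with `m` edges, every `S ⊆ V` with
`|S| = s` and total degree `d(S) ≤ m/(C·log n)`, every start vertex `u ∉ S`, and every
integer `t ≥ C·m/(s·(1 − λmax))`, the probability that the lazy simple random walk started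
at `u` visits no vertex of `S` during steps `0,…,t` is at most
`c·exp(−t·d(S)·(1 − λmax)/(14m))`. -/
theorem stmt5 :
    ∃ c C : ℝ, 0 < c ∧ 0 < C ∧ ∃ N : ℕ,
      ∀ (V : Type) [Fintype V] [DecidableEq V] (G : SimpleGraph V),
        N ≤ Fintype.card V → G.Connected →
        ∀ (S : Finset V) (u : V), u ∉ S →
          (∑ v ∈ S, ((G.neighborSet v).ncard : ℝ)) ≤
            (G.edgeSet.ncard : ℝ) / (C * Real.log (Fintype.card V)) →
          ∀ t : ℕ,
            C * (G.edgeSet.ncard : ℝ) / (S.card * (1 - lambdaMax (lazyMatrix G))) ≤ (t : ℝ) →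
            avoidProb (lazyMatrix G) S u t ≤
              c * Real.exp (-((t : ℝ) * (∑ v ∈ S, ((G.neighborSet v).ncard : ℝ)) *
                  (1 - lambdaMax (lazyMatrix G)) / (14 * (G.edgeSet.ncard : ℝ)))) := by
  refine ⟨2 * Real.exp 1, 1, by positivity, by norm_num, 3, ?_⟩
  intro V _ _ G hn hG S u huS hS t _
  have hd := deg_pos G hG (by omega)
  set P := lazyMatrix G with hP
  set l := lambdaMax P with hl
  set n : ℝ := (Fintype.card V : ℝ) with hnd
  set m : ℝ := (G.edgeSet.ncard : ℝ) with hm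
  set D := ∑ v ∈ S, ((G.neighborSet v).ncard : ℝ) with hD
  have hn3 : (3 : ℝ) ≤ n := by rw [hnd]; exact_mod_cast hn
  have hW := deg_sum G
  rw [← hm] at hW
  have hm0 : 0 < m := by
    have : (1 : ℝ) ≤ ∑ x, ((G.neighborSet x).ncard : ℝ) :=
      (hd u).trans (Finset.single_le_sum (f := fun x => ((G.neighborSet x).ncard : ℝ))
        (fun x _ => by positivity) (Finset.mem_univ u))
    linarith
  have hD0 : 0 ≤ D := Finset.sum_nonneg fun x _ => by positivity
  have h1 := lazy_row G hd
  have hmem := aa_mem P S (lazy_nonneg G) h1 t u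
  rw [avoid_eq_aa]
  have hlog : 1 ≤ Real.log n := by
    rw [Real.le_log_iff_exp_le (by linarith)]
    linarith [Real.exp_one_lt_d9]
  have hDm : D * Real.log n ≤ m := by
    rw [one_mul, le_div_iff₀ (by linarith)] at hS
    exact hS
  have triv : (t : ℝ) * D * (1 - l) / (14 * m) ≤ 1 →
      aa P S t u ≤ 2 * Real.exp 1 * Real.exp (-((t : ℝ) * D * (1 - l) / (14 * m))) := by
    intro h
    have : 1 ≤ Real.exp 1 * Real.exp (-((t : ℝ) * D * (1 - l) / (14 * m))) := by
      rw [← Real.exp_add]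
      exact Real.one_le_exp (by linarith)
    linarith [hmem.2]
  by_cases hl1 : 1 ≤ l
  · apply triv
    have : (t : ℝ) * D * (1 - l) / (14 * m) ≤ 0 :=
      div_nonpos_of_nonpos_of_nonneg
        (mul_nonpos_of_nonneg_of_nonpos (by positivity) (by linarith)) (by positivity)
    linarith
  push Not at hl1
  have hg : 0 < 1 - l := by linarith
  have hl0 : 0 ≤ l := lambdaMax_nonneg P
  set T := ⌈Real.log n / (1 - l)⌉₊ with hT
  have hT1 : Real.log n ≤ T * (1 - l) := by
    rw [← div_le_iff₀ hg]; exact Nat.le_ceil _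
  have hT2 : T * (1 - l) ≤ 2 * Real.log n := by
    have : (T : ℝ) < Real.log n / (1 - l) + 1 := Nat.ceil_lt_add_one (by positivity)
    have h2 : (T : ℝ) * (1 - l) ≤ (Real.log n / (1 - l) + 1) * (1 - l) :=
      mul_le_mul_of_nonneg_right this.le hg.le
    have h3 : (Real.log n / (1 - l) + 1) * (1 - l) = Real.log n + (1 - l) := by field_simp
    linarith
  have hTD : T * (1 - l) * D ≤ 2 * m := by
    have := mul_le_mul_of_nonneg_right hT2 hD0
    linarith
  rcases lt_or_ge t T with htT | htT
  · apply triv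
    rw [div_le_one (by positivity)]
    have : (t : ℝ) ≤ T := by exact_mod_cast htT.le
    have : (t : ℝ) * ((1 - l) * D) ≤ T * ((1 - l) * D) :=
      mul_le_mul_of_nonneg_right this (by positivity)
    linarith
  · obtain ⟨k, rfl⟩ := Nat.exists_eq_add_of_le' htT
    have hst : ∀ y, ∑ x, ((G.neighborSet x).ncard : ℝ) * P x y = ((G.neighborSet y).ncard : ℝ) := by
      intro y
      simp only [hP, lazy_rev G hd _ y, ← Finset.mul_sum, h1, mul_one]
    have key := aa_bound P (fun x => ((G.neighborSet x).ncard : ℝ)) (fun x => by positivity)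
      (by rw [hW]; positivity) (lazy_nonneg G) h1 hst l hl0 hl1.le
      (gap_abs P _ (fun x => by linarith [hd x]) (lazy_rev G hd) (lazy_harm G hG hd))
      S k T u (hd u) n (by linarith) (deg_sum_le G)
    rw [hW, ← hD] at key
    have hlT0 : 0 ≤ l ^ T := pow_nonneg hl0 T
    refine key.trans ?_
    clear_value T l n m D
    clear key hst triv
    have hlT : l ^ T * n ≤ 1 := by
      have a1 : l ≤ Real.exp (-(1 - l)) := by
        have := Real.add_one_le_exp (-(1 - l)); linarith
      have a2 : l ^ T ≤ Real.exp (-(T * (1 - l))) := by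
        calc l ^ T ≤ Real.exp (-(1 - l)) ^ T := pow_le_pow_left₀ hl0 a1 T
          _ = _ := by rw [← Real.exp_nat_mul]; congr 1; ring
      have a3 : Real.exp (-(T * (1 - l))) ≤ n⁻¹ := by
        rw [← Real.exp_log (show 0 < n by linarith), ← Real.exp_neg]
        apply Real.exp_le_exp.2
        linarith
      calc l ^ T * n ≤ n⁻¹ * n := mul_le_mul_of_nonneg_right (a2.trans a3) (by linarith)
        _ = 1 := inv_mul_cancel₀ (by linarith)
    have hr0 : 0 ≤ 1 - (1 - l) * (D / (2 * m)) := by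
      have : D / (2 * m) ≤ 1 := by
        rw [div_le_one (by positivity)]
        nlinarith
      have : 0 ≤ D / (2 * m) := by positivity
      nlinarith
    have hrk : (1 - (1 - l) * (D / (2 * m))) ^ k ≤ Real.exp (-(k * ((1 - l) * (D / (2 * m))))) := by
      calc _ ≤ Real.exp (-((1 - l) * (D / (2 * m)))) ^ k := by
            refine pow_le_pow_left₀ hr0 ?_ k
            have := Real.add_one_le_exp (-((1 - l) * (D / (2 * m)))); linarith
        _ = _ := by rw [← Real.exp_nat_mul]; congr 1; ring
    calc _ ≤ Real.exp (-(k * ((1 - l) * (D / (2 * m))))) * 2 :=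
          mul_le_mul hrk (by linarith)
            (add_nonneg zero_le_one (mul_nonneg hlT0 (by linarith))) (Real.exp_pos _).le
      _ ≤ (Real.exp 1 * Real.exp (-(((k + T : ℕ) : ℝ) * D * (1 - l) / (14 * m)))) * 2 := by
          refine mul_le_mul_of_nonneg_right ?_ (by norm_num)
          rw [← Real.exp_add]
          apply Real.exp_le_exp.2
          push_cast
          have b1 : (k : ℝ) * ((1 - l) * (D / (2 * m))) = 7 * (k * D * (1 - l) / (14 * m)) := by
            field_simp; ring
          have b2 : ((k : ℝ) + T) * D * (1 - l) / (14 * m) =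
              k * D * (1 - l) / (14 * m) + T * (1 - l) * D / (14 * m) := by ring
          have b3 : T * (1 - l) * D / (14 * m) ≤ 1 := by
            rw [div_le_one (by positivity)]; linarith
          have b4 : 0 ≤ k * D * (1 - l) / (14 * m) := by positivity
          rw [b1, b2]; linarith
      _ = _ := by ring
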